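/- Let W be the group of ℤ-linear automorphisms g of V = (Fin 7 → ℤ) satisfying ⟨g x, g y⟩ = ⟨x, y⟩ for all x, y ∈ V and g K = K. Then W has exactly 25 conjugacy classes. -/

import Mathlib

/-- The symmetric bilinear form of signature (1,6) on the lattice `Fin 7 → ℤ`,
modelling the Picard lattice of a smooth cubic surface. -/
def B (x y : Fin 7 → ℤ) : ℤ :=
  x 0 * y 0 - x 1 * y 1 - x 2 * y 2 - x 3 * y 3 - x 4 * y 4 - x 5 * y 5 - x 6 * y 6

/-- The canonical class `K = (-3,1,1,1,1,1,1)`. -/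
def K : Fin 7 → ℤ := ![-3, 1, 1, 1, 1, 1, 1]

/-- The set of ℤ-linear automorphisms of the lattice preserving the form and fixing `K`:
the Weyl group of `E₆`. -/
def Wset : Set ((Fin 7 → ℤ) ≃ₗ[ℤ] (Fin 7 → ℤ)) :=
  {g | (∀ x y, B (g x) (g y) = B x y) ∧ g K = K}

/-!
By Carter, the conjugacy classes of `W` are represented by products of reflections in linearly
independent roots, and the sets of roots involved are given by 25 diagrams. We take one such product
for each diagram. The traces of their second, third and fourth powers tell them apart, so there are
at least 25 classes.

The centralizer `C` of an element `g` is bounded by a stabilizer chain: `V` has a basis consisting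
of lines `l₁, …, l₇` (classes with `⟨l, l⟩ = ⟨l, K⟩ = -1`), hence `|C|` is the product of the sizes
of the orbits of `lᵢ` under the stabilizer of `l₁, …, lᵢ₋₁` in `C`. Everything in this orbit is one
of the 27 lines, and its pairings with the images of `l₁, …, lᵢ` under powers of `g` are
prescribed. The reciprocals of the resulting bounds on the 25 centralizers add up to 1, so the class
equation leaves no room for another class.
-/

open MulAction Subgroup Finset

section ClassEquation

variable {G : Type*} [Group G]

theorem ncard_carrier_mul_card_centralizer (g : G) :
    (ConjClasses.mk g).carrier.ncard * Nat.card (centralizer {g}) = Nat.card G := by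
  rw [nat_card_centralizer_nat_card_stabilizer, ← ConjAct.orbit_eq_carrier_conjClasses,
    ← index_stabilizer, index_mul_card]
  rfl

theorem card_conjClasses_eq_of_card_centralizer_le [Finite G] {ι : Type*} [Fintype ι]
    {g : ι → G} (hg : Function.Injective fun i => ConjClasses.mk (g i))
    {c : ι → ℕ} (hc : ∀ i, Nat.card (centralizer {g i}) ≤ c i)
    (hsum : 1 ≤ ∑ i, (c i : ℚ)⁻¹) :
    Nat.card (ConjClasses G) = Fintype.card ι := by
  classical
  have : Fintype (ConjClasses G) := Fintype.ofFinite _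
  have size_pos (x : ConjClasses G) : 0 < x.carrier.ncard := by
    obtain ⟨a, rfl⟩ := ConjClasses.exists_rep x
    exact (Set.ncard_pos).2 ⟨a, ConjClasses.mem_carrier_mk⟩
  have le_size (i : ι) :
      (Nat.card G : ℚ) * (c i : ℚ)⁻¹ ≤ (ConjClasses.mk (g i)).carrier.ncard := by
    have c_pos : 0 < c i := Nat.card_pos.trans_le (hc i)
    rw [← div_eq_mul_inv, div_le_iff₀ (by exact_mod_cast c_pos)]
    exact_mod_cast (ncard_carrier_mul_card_centralizer (g i)).ge.trans
      (Nat.mul_le_mul_left _ (hc i))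
  have class_equation : ∑ x : ConjClasses G, x.carrier.ncard = Nat.card G := by
    rw [← Group.sum_card_conj_classes_eq_card G, finsum_eq_sum_of_fintype]
  have sum_ge : ∑ x : ConjClasses G, x.carrier.ncard ≤
      ∑ x ∈ univ.image fun i => ConjClasses.mk (g i), x.carrier.ncard := by
    rw [class_equation, sum_image hg.injOn]
    have card_le_sum : (Nat.card G : ℚ) ≤ ∑ i, ((ConjClasses.mk (g i)).carrier.ncard : ℚ) := calc
      (Nat.card G : ℚ) ≤ Nat.card G * ∑ i, (c i : ℚ)⁻¹ :=
        le_mul_of_one_le_right (Nat.cast_nonneg _) hsum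
      _ ≤ ∑ i, ((ConjClasses.mk (g i)).carrier.ncard : ℚ) := by
        rw [mul_sum]
        exact sum_le_sum fun i _ => le_size i
    exact_mod_cast card_le_sum
  have surjective : Function.Surjective fun i => ConjClasses.mk (g i) := by
    by_contra! h
    obtain ⟨x, hx⟩ := not_forall.1 h
    refine sum_ge.not_gt (sum_lt_sum_of_subset (subset_univ _) (mem_univ x) ?_ (size_pos x)
      fun _ _ _ => Nat.zero_le _)
    simpa using hx
  rw [← Nat.card_eq_of_bijective _ ⟨hg, surjective⟩, Nat.card_eq_fintype_card]

end ClassEquation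

section StabilizerChain

variable {G α : Type*} [Group G] [MulAction G α]

theorem card_eq_ncard_orbit_mul_card_inf_stabilizer (H : Subgroup G) (a : α) :
    Nat.card H = (orbit H a).ncard * Nat.card (H ⊓ stabilizer G a : Subgroup G) := by
  have stabilizer_eq : stabilizer H a = (stabilizer G a).subgroupOf H := rfl
  rw [← index_stabilizer, stabilizer_eq, ← inf_subgroupOf_left,
    ← Nat.card_congr (subgroupOfEquivOfLe (inf_le_left : H ⊓ stabilizer G a ≤ H)).toEquiv,
    index_mul_card]

/-- The bound on the order of a group given by a stabilizer chain along a list of base points, when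
the orbit of a point `a` under the pointwise stabilizer of a list `S` has at most `N S a` elements.
The list `S` collects the base points that are already fixed. -/
def chainBound (N : List α → α → ℕ) : List α → List α → ℕ
  | _, [] => 1
  | S, a :: L => N S a * chainBound N (a :: S) L

theorem card_inf_fixingSubgroup_le (H : Subgroup G) {N : List α → α → ℕ} {L S : List α}
    (hN : ∀ S, ∀ a ∈ L, (orbit ↥(H ⊓ fixingSubgroup G {x | x ∈ S}) a).ncard ≤ N S a) :
    Nat.card ↥(H ⊓ fixingSubgroup G {x | x ∈ S}) ≤
      chainBound N S L * Nat.card ↥(H ⊓ fixingSubgroup G {x | x ∈ L ++ S}) := by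
  induction L generalizing S with
  | nil => simp [chainBound]
  | cons a L ih =>
    have inf_stabilizer : H ⊓ fixingSubgroup G {x | x ∈ S} ⊓ stabilizer G a =
        H ⊓ fixingSubgroup G {x | x ∈ a :: S} := by
      ext h
      simp only [Subgroup.mem_inf, mem_fixingSubgroup_iff, mem_stabilizer_iff, Set.mem_ofPred_eq,
        List.forall_mem_cons]
      tauto
    have append_cons : {x | x ∈ L ++ a :: S} = {x | x ∈ a :: L ++ S} := by
      ext x
      simp [or_left_comm]
    rw [card_eq_ncard_orbit_mul_card_inf_stabilizer _ a, inf_stabilizer, chainBound, mul_assoc,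
      ← append_cons]
    exact Nat.mul_le_mul (hN S a List.mem_cons_self)
      (ih fun S b hb => hN S b (List.mem_cons_of_mem a hb))

end StabilizerChain

theorem eq_zero_or_eq_of_sum_sq_eq {ι : Type*} [Fintype ι] {s : ℤ} (hs : IsUnit s) {y : ι → ℤ}
    (h : ∑ i, y i ^ 2 = s * ∑ i, y i) (i : ι) : y i = 0 ∨ y i = s := by
  have nonneg (t : ℤ) : 0 ≤ t * (t - s) := by
    rcases Int.isUnit_iff.1 hs with rfl | rfl
    · rcases le_or_gt t 0 with ht | ht <;> nlinarith
    · rcases lt_or_ge t 0 with ht | ht <;> nlinarith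
  have sum_eq_zero : ∑ i, y i * (y i - s) = 0 := by
    simp only [mul_sub, sum_sub_distrib, ← sum_mul, ← pow_two, h, mul_comm s, sub_self]
  have term_eq_zero : y i * (y i - s) = 0 :=
    (sum_eq_zero_iff_of_nonneg fun i _ => nonneg (y i)).1 sum_eq_zero i (mem_univ i)
  simpa [sub_eq_zero] using term_eq_zero

section Lattice

/-- The form `B` as a Mathlib bilinear form. -/
def intersectionForm : LinearMap.BilinForm ℤ (Fin 7 → ℤ) :=
  LinearMap.mk₂ ℤ B
    (fun _ _ _ => by simp only [B, Pi.add_apply]; ring)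
    (fun _ _ _ => by simp only [B, Pi.smul_apply, smul_eq_mul]; ring)
    (fun _ _ _ => by simp only [B, Pi.add_apply]; ring)
    (fun _ _ _ => by simp only [B, Pi.smul_apply, smul_eq_mul]; ring)

theorem intersectionForm_apply (x y : Fin 7 → ℤ) : intersectionForm x y = B x y :=
  rfl

theorem B_comm (x y : Fin 7 → ℤ) : B x y = B y x := by
  simp only [B]; ring

theorem B_eq_mul_sub_sum (x y : Fin 7 → ℤ) :
    B x y = x 0 * y 0 - ∑ i : Fin 6, x i.succ * y i.succ := by
  simp only [B, Fin.sum_univ_six, Fin.reduceSucc]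
  ring

theorem B_K (x : Fin 7 → ℤ) : B x K = -3 * x 0 - ∑ i : Fin 6, x i.succ := by
  have K_succ (i : Fin 6) : K i.succ = 1 := by decide +revert
  simp only [B_eq_mul_sub_sum, K_succ, mul_one, mul_comm (x 0)]
  rfl

/-- The group of automorphisms with underlying set `Wset`. -/
def weylGroup : Subgroup ((Fin 7 → ℤ) ≃ₗ[ℤ] (Fin 7 → ℤ)) where
  carrier := Wset
  one_mem' := ⟨fun _ _ => rfl, rfl⟩
  mul_mem' {g h} hg hh :=
    ⟨fun x y => (hg.1 (h x) (h y)).trans (hh.1 x y), (congrArg g hh.2).trans hg.2⟩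
  inv_mem' {g} hg :=
    ⟨fun x y => by simpa using (hg.1 (g⁻¹ x) (g⁻¹ y)).symm, g.symm_apply_eq.2 hg.2.symm⟩

theorem B_smul_smul (g : weylGroup) (x y : Fin 7 → ℤ) : B (g • x) (g • y) = B x y :=
  g.2.1 x y

theorem smul_K (g : weylGroup) : g • K = K :=
  g.2.2

end Lattice

section Reflections

/-- Roots of the `E₆` lattice `Kᗮ`, which is negative definite for `B`, whence the sign. -/
def IsRoot (a : Fin 7 → ℤ) : Prop :=
  B a a = -2 ∧ B a K = 0

/-- The reflection in a vector `a` with `⟨a, a⟩ = -2`, as a plain function. -/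
def reflect (a x : Fin 7 → ℤ) : Fin 7 → ℤ :=
  x + B x a • a

theorem B_reflect_reflect {a : Fin 7 → ℤ} (ha : B a a = -2) (x y : Fin 7 → ℤ) :
    B (reflect a x) (reflect a y) = B x y := by
  rw [reflect, reflect, ← intersectionForm_apply]
  simp only [map_add, map_smul, LinearMap.add_apply, LinearMap.smul_apply, smul_eq_mul,
    intersectionForm_apply, ha, B_comm a y]
  ring

theorem reflect_K {a : Fin 7 → ℤ} (ha : B a K = 0) : reflect a K = K := by
  rw [reflect, B_comm, ha, zero_smul, add_zero]

theorem IsRoot.neg_flip_intersectionForm_apply_self {a : Fin 7 → ℤ} (ha : IsRoot a) :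
    (-intersectionForm.flip a) a = 2 :=
  neg_eq_iff_eq_neg.2 ha.1

theorem IsRoot.reflection_apply {a : Fin 7 → ℤ} (ha : IsRoot a) (x : Fin 7 → ℤ) :
    Module.reflection ha.neg_flip_intersectionForm_apply_self x = reflect a x := by
  rw [Module.reflection_apply, LinearMap.neg_apply, neg_smul, sub_neg_eq_add]
  rfl

/-- The reflection in a root, as an element of the Weyl group. -/
def rootReflection (a : Fin 7 → ℤ) (ha : IsRoot a) : weylGroup :=
  ⟨Module.reflection ha.neg_flip_intersectionForm_apply_self,
    fun x y => by rw [ha.reflection_apply, ha.reflection_apply, B_reflect_reflect ha.1],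
    by rw [ha.reflection_apply, reflect_K ha.2]⟩

theorem rootReflection_smul {a : Fin 7 → ℤ} (ha : IsRoot a) (x : Fin 7 → ℤ) :
    rootReflection a ha • x = reflect a x :=
  ha.reflection_apply x

/-- The roots used for the representatives: the simple roots `eᵢ - eᵢ₊₁` and `e₀ - e₁ - e₂ - e₃`,
the highest root, which extends the Dynkin diagram, and `e₀ - e₁ - e₄ - e₅`, which closes a 4-cycle
with the roots numbered 0, 1, 2. -/
def root : Fin 8 → Fin 7 → ℤ :=
  ![![0, 1, -1, 0, 0, 0, 0],
    ![0, 0, 1, -1, 0, 0, 0],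
    ![0, 0, 0, 1, -1, 0, 0],
    ![0, 0, 0, 0, 1, -1, 0],
    ![0, 0, 0, 0, 0, 1, -1],
    ![1, -1, -1, -1, 0, 0, 0],
    ![2, -1, -1, -1, -1, -1, -1],
    ![1, -1, 0, 0, -1, -1, 0]]

theorem isRoot_root (i : Fin 8) : IsRoot (root i) := by
  unfold IsRoot
  decide +revert

/-- The action on the lattice of the product of the reflections in the roots listed in `w`, as a
plain function that the kernel can evaluate. -/
def wordAction (w : List (Fin 8)) (x : Fin 7 → ℤ) : Fin 7 → ℤ :=
  w.foldr (fun i => reflect (root i)) x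

/-- The product of the reflections in the roots listed in `w`. -/
def wordElement (w : List (Fin 8)) : weylGroup :=
  (w.map fun i => rootReflection (root i) (isRoot_root i)).prod

theorem wordElement_smul (w : List (Fin 8)) (x : Fin 7 → ℤ) :
    wordElement w • x = wordAction w x := by
  induction w with
  | nil => exact one_smul _ x
  | cons i w ih =>
    rw [wordElement, List.map_cons, List.prod_cons, mul_smul, rootReflection_smul]
    exact congrArg (reflect (root i)) ih

end Reflections

section Lines

/-- The classes of the 27 lines on the surface, seen as the plane blown up in six points: the
exceptional curves, the lines through two of the points, and the conics through five of them. -/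
def lines : List (Fin 7 → ℤ) :=
  [![0, 1, 0, 0, 0, 0, 0],
   ![0, 0, 1, 0, 0, 0, 0],
   ![0, 0, 0, 1, 0, 0, 0],
   ![0, 0, 0, 0, 1, 0, 0],
   ![0, 0, 0, 0, 0, 1, 0],
   ![0, 0, 0, 0, 0, 0, 1],
   ![1, -1, -1, 0, 0, 0, 0],
   ![1, -1, 0, -1, 0, 0, 0],
   ![1, -1, 0, 0, -1, 0, 0],
   ![1, -1, 0, 0, 0, -1, 0],
   ![1, -1, 0, 0, 0, 0, -1],
   ![1, 0, -1, -1, 0, 0, 0],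
   ![1, 0, -1, 0, -1, 0, 0],
   ![1, 0, -1, 0, 0, -1, 0],
   ![1, 0, -1, 0, 0, 0, -1],
   ![1, 0, 0, -1, -1, 0, 0],
   ![1, 0, 0, -1, 0, -1, 0],
   ![1, 0, 0, -1, 0, 0, -1],
   ![1, 0, 0, 0, -1, -1, 0],
   ![1, 0, 0, 0, -1, 0, -1],
   ![1, 0, 0, 0, 0, -1, -1],
   ![2, 0, -1, -1, -1, -1, -1],
   ![2, -1, 0, -1, -1, -1, -1],
   ![2, -1, -1, 0, -1, -1, -1],
   ![2, -1, -1, -1, 0, -1, -1],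
   ![2, -1, -1, -1, -1, 0, -1],
   ![2, -1, -1, -1, -1, -1, 0]]

theorem cons_mem_lines_of_sum_eq {z s : ℤ} (hzs : (z, s) ∈ [(0, 1), (1, -1), (2, -1)])
    {T : Finset (Fin 6)} (hT : ∑ i, (if i ∈ T then s else 0) = 1 - 3 * z) :
    (Fin.cons z fun i => if i ∈ T then s else 0 : Fin 7 → ℤ) ∈ lines :=
  (by decide +kernel : ∀ p ∈ [((0 : ℤ), (1 : ℤ)), (1, -1), (2, -1)], ∀ T : Finset (Fin 6),
    ∑ i, (if i ∈ T then p.2 else 0) = 1 - 3 * p.1 →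
      (Fin.cons p.1 fun i => if i ∈ T then p.2 else 0 : Fin 7 → ℤ) ∈ lines) (z, s) hzs T hT

theorem mem_lines_iff {x : Fin 7 → ℤ} : x ∈ lines ↔ B x x = -1 ∧ B x K = -1 := by
  refine ⟨fun hx => (by decide : ∀ x ∈ lines, B x x = -1 ∧ B x K = -1) x hx, fun ⟨hxx, hxK⟩ => ?_⟩
  obtain ⟨z, y, rfl⟩ : ∃ z y, x = Fin.cons z y := ⟨x 0, Fin.tail x, (Fin.cons_self_tail x).symm⟩
  have sum_sq : ∑ i, y i ^ 2 = z ^ 2 + 1 := by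
    simp only [B_eq_mul_sub_sum, Fin.cons_zero, Fin.cons_succ, ← pow_two] at hxx
    linarith
  have sum_eq : ∑ i, y i = 1 - 3 * z := by
    simp only [B_K, Fin.cons_zero, Fin.cons_succ] at hxK
    linarith
  have cauchy_schwarz : (1 - 3 * z) ^ 2 ≤ 6 * (z ^ 2 + 1) := by
    simpa [sum_sq, sum_eq] using sq_sum_le_card_mul_sum_sq (s := univ) (f := y)
  have z_nonneg : 0 ≤ z := by nlinarith
  have z_le_two : z ≤ 2 := by nlinarith
  obtain ⟨s, hzs, hys⟩ : ∃ s : ℤ,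
      (z, s) ∈ [(0, 1), (1, -1), (2, -1)] ∧ ∀ i, y i = 0 ∨ y i = s := by
    interval_cases z
    · exact ⟨1, by simp, eq_zero_or_eq_of_sum_sq_eq isUnit_one (by linarith)⟩
    · exact ⟨-1, by simp, eq_zero_or_eq_of_sum_sq_eq isUnit_one.neg (by linarith)⟩
    · exact ⟨-1, by simp, eq_zero_or_eq_of_sum_sq_eq isUnit_one.neg (by linarith)⟩
  obtain ⟨T, rfl⟩ : ∃ T : Finset (Fin 6), y = fun i => if i ∈ T then s else 0 :=
    ⟨({i | y i = s} : Finset (Fin 6)), by grind⟩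
  exact cons_mem_lines_of_sum_eq hzs sum_eq

theorem smul_mem_lines (g : weylGroup) {l : Fin 7 → ℤ} (hl : l ∈ lines) : g • l ∈ lines := by
  rw [mem_lines_iff, B_smul_smul, ← smul_K g, B_smul_smul]
  exact mem_lines_iff.1 hl

/-- A basis of the lattice that consists of lines. -/
def lineBasis : List (Fin 7 → ℤ) :=
  [![1, -1, -1, 0, 0, 0, 0],
   ![0, 1, 0, 0, 0, 0, 0],
   ![0, 0, 1, 0, 0, 0, 0],
   ![0, 0, 0, 1, 0, 0, 0],
   ![0, 0, 0, 0, 1, 0, 0],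
   ![0, 0, 0, 0, 0, 1, 0],
   ![0, 0, 0, 0, 0, 0, 1]]

theorem mem_lines_of_mem_lineBasis {l : Fin 7 → ℤ} (hl : l ∈ lineBasis) : l ∈ lines := by
  decide +revert

theorem span_lineBasis : Submodule.span ℤ {l | l ∈ lineBasis} = ⊤ := by
  refine eq_top_iff.2 fun x _ => ?_
  have expansion : x = ∑ i : Fin 7,
      ![x 0, x 0 + x 1, x 0 + x 2, x 3, x 4, x 5, x 6] i • lineBasis.get i := by
    ext j
    fin_cases j <;> simp [lineBasis, Fin.sum_univ_seven]
  rw [expansion]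
  exact Submodule.sum_mem _ fun i _ =>
    Submodule.smul_mem _ _ (Submodule.subset_span (lineBasis.get_mem i))

theorem eq_of_forall_smul_eq_smul {g h : weylGroup} (hgh : ∀ l ∈ lineBasis, g • l = h • l) :
    g = h :=
  Subtype.ext <| LinearEquiv.toLinearMap_injective <| LinearMap.ext_on span_lineBasis hgh

instance : Finite weylGroup :=
  Finite.of_injective (β := {l // l ∈ lineBasis} → {l // l ∈ lines})
    (fun g l => ⟨g • l.1, smul_mem_lines g (mem_lines_of_mem_lineBasis l.2)⟩)
    fun _ _ h => eq_of_forall_smul_eq_smul fun l hl => congrArg Subtype.val (congrFun h ⟨l, hl⟩)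

theorem fixingSubgroup_lineBasis : fixingSubgroup weylGroup {l | l ∈ lineBasis} = ⊥ :=
  (Subgroup.eq_bot_iff_forall _).2 fun g hg => eq_of_forall_smul_eq_smul fun l hl => by
    rw [one_smul]
    exact (mem_fixingSubgroup_iff _).1 hg l hl

end Lines

section Centralizers

/-- The lines `m` that may be the image of `l` under an isometry commuting with `f` and fixing `S`
pointwise: their pairings with the iterates of `m` and of `S` under `f` are those of `l`. Three
iterates suffice to make all orbit bounds below sharp. -/
def candidates (f : (Fin 7 → ℤ) → Fin 7 → ℤ) (S : List (Fin 7 → ℤ)) (l : Fin 7 → ℤ) :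
    List (Fin 7 → ℤ) :=
  lines.filter fun m => decide <| ∀ k ∈ List.range 3, B (f^[k] m) m = B (f^[k] l) l ∧
    ∀ p ∈ S, B (f^[k] p) m = B (f^[k] p) l

theorem smul_mem_candidates {g h : weylGroup} (hgh : Commute g h) {S : List (Fin 7 → ℤ)}
    (hS : ∀ p ∈ S, h • p = p) {l : Fin 7 → ℤ} (hl : l ∈ lines) :
    h • l ∈ candidates (g • ·) S l := by
  have B_iterate_smul (k : ℕ) (x y : Fin 7 → ℤ) :
      B ((g • ·)^[k] (h • x)) (h • y) = B ((g • ·)^[k] x) y := by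
    rw [smul_iterate_apply, smul_iterate_apply, smul_smul, (hgh.pow_left k).eq, mul_smul,
      B_smul_smul]
  refine List.mem_filter.2
    ⟨smul_mem_lines h hl, decide_eq_true fun k _ => ⟨B_iterate_smul k l l, fun p hp => ?_⟩⟩
  simpa only [hS p hp] using B_iterate_smul k p l

theorem ncard_orbit_le_length_candidates (g : weylGroup) (S : List (Fin 7 → ℤ))
    {l : Fin 7 → ℤ} (hl : l ∈ lines) :
    (orbit ↥(centralizer {g} ⊓ fixingSubgroup weylGroup {x | x ∈ S}) l).ncard ≤
      (candidates (g • ·) S l).length := by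
  classical
  have orbit_subset : orbit ↥(centralizer {g} ⊓ fixingSubgroup weylGroup {x | x ∈ S}) l ⊆
      (candidates (g • ·) S l).toFinset := by
    rintro _ ⟨⟨h, h_centralizes, h_fixes⟩, rfl⟩
    exact List.mem_toFinset.2 <|
      smul_mem_candidates (mem_centralizer_singleton_iff.1 h_centralizes).symm
        ((mem_fixingSubgroup_iff _).1 h_fixes) hl
  exact (Set.ncard_le_ncard orbit_subset).trans <|
    (Set.ncard_coe_finset _).trans_le (List.toFinset_card_le _)

theorem card_centralizer_le (g : weylGroup) :
    Nat.card (centralizer {g}) ≤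
      chainBound (fun S l => (candidates (g • ·) S l).length) [] lineBasis := by
  have := card_inf_fixingSubgroup_le (centralizer {g}) (S := []) fun S l hl =>
    ncard_orbit_le_length_candidates g S (mem_lines_of_mem_lineBasis hl)
  simpa [fixingSubgroup_lineBasis] using this

end Centralizers

section Traces

theorem trace_eq_sum_apply_single {R n : Type*} [CommRing R] [Fintype n] [DecidableEq n]
    (f : (n → R) →ₗ[R] n → R) :
    LinearMap.trace R _ f = ∑ j, f (Pi.single j 1) j := by
  rw [LinearMap.trace_eq_matrix_trace R (Pi.basisFun R n)]
  simp [Matrix.trace]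

/-- The trace of `f^[k]` for a linear `f`, as an expression in the plain function `f` that the
kernel can evaluate. -/
def traceIterate (f : (Fin 7 → ℤ) → Fin 7 → ℤ) (k : ℕ) : ℤ :=
  ∑ j, f^[k] (Pi.single j 1) j

theorem traceIterate_smul (g : weylGroup) (k : ℕ) :
    traceIterate (g • ·) k =
      LinearMap.trace ℤ _ ((g ^ k : weylGroup) : (Fin 7 → ℤ) ≃ₗ[ℤ] (Fin 7 → ℤ)).toLinearMap := by
  rw [trace_eq_sum_apply_single]
  simp only [traceIterate, smul_iterate_apply]
  rfl

theorem traceIterate_eq_of_isConj {g h : weylGroup} (hgh : IsConj g h) (k : ℕ) :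
    traceIterate (g • ·) k = traceIterate (h • ·) k := by
  obtain ⟨c, rfl⟩ := isConj_iff.1 hgh
  rw [traceIterate_smul, traceIterate_smul, conj_pow]
  exact (LinearMap.trace_conj' _ (c : (Fin 7 → ℤ) ≃ₗ[ℤ] Fin 7 → ℤ)).symm

end Traces

section Representatives

/-- Carter's labels of the conjugacy classes: the Dynkin type of the roots whose reflections are
multiplied. The types `D₄(a₁)`, `D₅(a₁)`, `E₆(a₁)`, `E₆(a₂)` belong to diagrams containing
4-cycles. -/
inductive CarterType
  | one | A₁ | twoA₁ | threeA₁ | fourA₁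
  | A₂ | A₂A₁ | A₂TwoA₁ | twoA₂ | twoA₂A₁ | threeA₂
  | A₃ | A₃A₁ | A₃TwoA₁
  | A₄ | A₄A₁
  | A₅ | A₅A₁
  | D₄ | D₄a₁ | D₅ | D₅a₁
  | E₆ | E₆a₁ | E₆a₂
  deriving DecidableEq

namespace CarterType

instance : Fintype CarterType where
  elems := {one, A₁, twoA₁, threeA₁, fourA₁, A₂, A₂A₁, A₂TwoA₁, twoA₂, twoA₂A₁, threeA₂,
    A₃, A₃A₁, A₃TwoA₁, A₄, A₄A₁, A₅, A₅A₁, D₄, D₄a₁, D₅, D₅a₁, E₆, E₆a₁, E₆a₂}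
  complete t := by cases t <;> decide

/-- A representative, as a word in the reflections in `root`. Among the conjugates and orders of the
factors, the choice is one for which the bound of `card_centralizer_le` is sharp. -/
def word : CarterType → List (Fin 8)
  | one => []
  | A₁ => [0]
  | twoA₁ => [0, 5]
  | threeA₁ => [0, 2, 4]
  | fourA₁ => [0, 2, 4, 6]
  | A₂ => [0, 1]
  | A₂A₁ => [0, 1, 5]
  | A₂TwoA₁ => [0, 1, 3, 5]
  | twoA₂ => [0, 1, 3, 4]
  | twoA₂A₁ => [0, 1, 3, 4, 5]
  | threeA₂ => [0, 1, 3, 4, 5, 6]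
  | A₃ => [0, 1, 2]
  | A₃A₁ => [0, 1, 2, 4]
  | A₃TwoA₁ => [0, 1, 2, 4, 6]
  | A₄ => [0, 1, 2, 5]
  | A₄A₁ => [0, 1, 2, 4, 5]
  | A₅ => [0, 1, 2, 3, 4]
  | A₅A₁ => [0, 1, 2, 3, 4, 6]
  | D₄ => [1, 3, 5, 2]
  | D₄a₁ => [0, 2, 1, 7]
  | D₅ => [1, 3, 4, 5, 2]
  | D₅a₁ => [0, 2, 1, 5, 7]
  | E₆ => [0, 1, 2, 3, 4, 5]
  | E₆a₁ => [0, 2, 6, 1, 3, 7]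
  | E₆a₂ => [0, 2, 4, 1, 3, 7]

/-- The order of the centralizer. Only an upper bound is proved directly; the class equation then
turns it into an equality. -/
def centralizerOrder : CarterType → ℕ
  | one => 51840
  | A₁ => 1440
  | twoA₁ => 192
  | threeA₁ => 96
  | fourA₁ => 1152
  | A₂ => 216
  | A₂A₁ => 36
  | A₂TwoA₁ => 24
  | twoA₂ => 108
  | twoA₂A₁ => 36
  | threeA₂ => 648
  | A₃ => 32
  | A₃A₁ => 16
  | A₃TwoA₁ => 96
  | A₄ => 10
  | A₄A₁ => 10
  | A₅ => 12
  | A₅A₁ => 36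
  | D₄ => 36
  | D₄a₁ => 96
  | D₅ => 8
  | D₅a₁ => 12
  | E₆ => 12
  | E₆a₁ => 9
  | E₆a₂ => 72

/-- The representative of a Carter type in the Weyl group. -/
def representative (t : CarterType) : weylGroup :=
  wordElement t.word

theorem sum_inv_centralizerOrder : ∑ t : CarterType, (t.centralizerOrder : ℚ)⁻¹ = 1 := by
  decide +kernel

theorem representative_smul (t : CarterType) : (t.representative • ·) = wordAction t.word :=
  funext (wordElement_smul t.word)

theorem injective_traceIterate_word :
    Function.Injective fun t : CarterType =>
      [2, 3, 4].map (traceIterate (wordAction t.word)) := by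
  decide +kernel

theorem injective_mk_representative :
    Function.Injective fun t : CarterType => ConjClasses.mk t.representative := by
  intro s t hst
  refine injective_traceIterate_word (List.map_congr_left fun k _ => ?_)
  rw [← representative_smul, ← representative_smul]
  exact traceIterate_eq_of_isConj (ConjClasses.mk_eq_mk_iff_isConj.1 hst) k

theorem card_centralizer_representative_le (t : CarterType) :
    Nat.card (centralizer {t.representative}) ≤ t.centralizerOrder := by
  refine (card_centralizer_le _).trans ?_
  rw [representative_smul]
  decide +kernel +revert

end CarterType

theorem card_conjClasses_weylGroup : Nat.card (ConjClasses weylGroup) = Fintype.card CarterType :=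
  card_conjClasses_eq_of_card_centralizer_le CarterType.injective_mk_representative
    CarterType.card_centralizer_representative_le CarterType.sum_inv_centralizerOrder.ge

end Representatives

/-- The Weyl group of `E₆`, realized as the form-preserving automorphisms of the
lattice fixing `K`, has exactly 25 conjugacy classes. -/
theorem weyl_group_conj_classes :
    ∃ W : Subgroup ((Fin 7 → ℤ) ≃ₗ[ℤ] (Fin 7 → ℤ)),
      (W : Set ((Fin 7 → ℤ) ≃ₗ[ℤ] (Fin 7 → ℤ))) = Wset ∧
        Nat.card (ConjClasses ↥W) = 25 :=
  ⟨weylGroup, rfl, card_conjClasses_weylGroup⟩
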